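/- Let K be a commutative ring, S a noetherian commutative K-algebra that is projective as a K-module and such that S^ev = S ⊗_K S is noetherian, and let G be a finite group acting on S infinitesimally through outer K-linear automorphisms, with |G| invertible in K. Assume the invariant ring R = S^G is noetherian and S is a finitely generated R-module. Let c = depth(θ(S/R), S) be the depth of the Noether different of S over R. Then there are natural isomorphisms Hoch^i(R) ≅ (Hoch^i(S))^G for all i ≤ c − 2, where Hochschild cohomology is taken over K and G acts on Hoch^i(S) via its action on S. -/

import Mathlib

open CategoryTheory MulOpposite

attribute [local instance] HasDerivedCategory.standard
attribute [local instance] CategoryTheory.hasExt_of_hasDerivedCategory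

set_option maxHeartbeats 1000000
set_option synthInstance.maxHeartbeats 400000

noncomputable section
namespace MoritaHochschild

/-! ### Hochschild cochains over a commutative base ring `K` (bar-complex description) -/

section HochschildCochains

/-- Merging of consecutive entries: given `a : Fin (n+1) → R` and `i : Fin n`, the
`n`-tuple `(a 0, …, a (i-1), a i * a (i+1), a (i+2), …, a n)`. -/
def mulConsec {R : Type} [Mul R] {n : ℕ} (a : Fin (n + 1) → R) (i : Fin n) :
    Fin n → R :=
  fun j =>
    if j.1 < i.1 then a (Fin.castSucc j)
    else if j.1 = i.1 then a (Fin.castSucc j) * a j.succ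
    else a j.succ

/-- The Hochschild coboundary of an (inhomogeneous) `n`-cochain `f` on `R` with values in
an `R`-bimodule `V`:
`(d f)(a₀, …, aₙ) = a₀ • f(a₁, …, aₙ) + ∑ᵢ (-1)^(i+1) f(a₀, …, aᵢ·aᵢ₊₁, …, aₙ)
  + (-1)^(n+1) f(a₀, …, a_{n-1}) • aₙ`. -/
def hd {R V : Type} [Ring R] [AddCommGroup V] [SMul R V] [SMul Rᵐᵒᵖ V] {n : ℕ}
    (f : (Fin n → R) → V) : (Fin (n + 1) → R) → V :=
  fun a =>
    a 0 • f (Fin.tail a)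
    + (Finset.univ.sum fun i : Fin n => ((-1 : ℤ) ^ (i.1 + 1)) • f (mulConsec a i))
    + ((-1 : ℤ) ^ (n + 1)) • ((MulOpposite.op (a (Fin.last n))) • f (Fin.init a))

/-- `K`-multilinearity of a raw cochain (so that multilinear cochains correspond to
`R^{ev}`-linear maps on the bar resolution `R^{⊗ K (n+2)}`). -/
def IsMultilinearCochain (K : Type) [CommRing K] {R V : Type} [Ring R] [Module K R]
    [AddCommGroup V] [Module K V] {n : ℕ} (f : (Fin n → R) → V) : Prop :=
  (∀ (a : Fin n → R) (i : Fin n) (x y : R),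
      f (Function.update a i (x + y)) = f (Function.update a i x) + f (Function.update a i y))
  ∧ (∀ (a : Fin n → R) (i : Fin n) (k : K) (x : R),
      f (Function.update a i (k • x)) = k • f (Function.update a i x))

/-- A cochain is a coboundary if it is `d` of a multilinear cochain
(in degree `0`, only the zero cochain is a coboundary). -/
def IsCoboundary (K : Type) [CommRing K] {R V : Type} [Ring R] [Module K R]
    [AddCommGroup V] [Module K V] [SMul R V] [SMul Rᵐᵒᵖ V] :
    ∀ {n : ℕ}, ((Fin n → R) → V) → Prop
  | 0, u => u = 0
  | _ + 1, u => ∃ h, IsMultilinearCochain K h ∧ u = hd h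

/-- The cup product of Hochschild cochains (with coefficients in the ring itself). -/
def cup {R : Type} [Ring R] {m n : ℕ} (f : (Fin m → R) → R) (g : (Fin n → R) → R) :
    (Fin (m + n) → R) → R :=
  fun a => f (fun i => a (Fin.castAdd n i)) * g (fun j => a (Fin.natAdd m j))

end HochschildCochains
section HochschildLaws

variable {K : Type} [CommRing K] {R : Type} [Ring R] [Module K R] {n : ℕ}

lemma hd_add (f g : (Fin n → R) → R) : hd (f + g) = hd f + hd g := by
  funext a
  show hd (f + g) a = hd f a + hd g a
  simp only [hd, Pi.add_apply, smul_add, Finset.sum_add_distrib]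
  abel

lemma hd_neg (f : (Fin n → R) → R) : hd (-f) = -hd f := by
  funext a
  show hd (-f) a = -hd f a
  simp only [hd, Pi.neg_apply, smul_neg, Finset.sum_neg_distrib, neg_add]

lemma hd_zero : hd (0 : (Fin n → R) → R) = 0 := by
  funext a
  show hd (0 : (Fin n → R) → R) a = 0
  simp [hd]

lemma IsMultilinearCochain.add {f g : (Fin n → R) → R}
    (hf : IsMultilinearCochain K f) (hg : IsMultilinearCochain K g) :
    IsMultilinearCochain K (f + g) := by
  constructor
  · intro a i x y
    show f _ + g _ = (f _ + g _) + (f _ + g _)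
    rw [hf.1 a i x y, hg.1 a i x y]
    abel
  · intro a i k x
    show f _ + g _ = k • (f _ + g _)
    rw [hf.2 a i k x, hg.2 a i k x, smul_add]

lemma IsMultilinearCochain.neg {f : (Fin n → R) → R}
    (hf : IsMultilinearCochain K f) : IsMultilinearCochain K (-f) := by
  constructor
  · intro a i x y
    show -f _ = -f _ + -f _
    rw [hf.1 a i x y]
    abel
  · intro a i k x
    show -f _ = k • (-f _)
    rw [hf.2 a i k x, smul_neg]

lemma IsMultilinearCochain.zero : IsMultilinearCochain K (0 : (Fin n → R) → R) := by
  constructor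
  · intro a i x y
    show (0 : R) = 0 + 0
    rw [add_zero]
  · intro a i k x
    show (0 : R) = k • (0 : R)
    rw [smul_zero]

/-- The multilinear cocycles: the `n`-th term of the complex computing Hochschild
cohomology `Hoch^•(R)` (cochain description of `Hom_{R^{ev}}(𝔹 R, R)`). -/
def cocycles (K R : Type) [CommRing K] [Ring R] [Module K R] (n : ℕ) :
    AddSubgroup ((Fin n → R) → R) where
  carrier := {f | IsMultilinearCochain K f ∧ hd f = 0}
  add_mem' := fun hf hg => ⟨hf.1.add hg.1, by rw [hd_add, hf.2, hg.2, add_zero]⟩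
  zero_mem' := ⟨IsMultilinearCochain.zero, hd_zero⟩
  neg_mem' := fun hf => ⟨hf.1.neg, by rw [hd_neg, hf.2, neg_zero]⟩

/-- The coboundaries, as a subgroup of the cocycles. -/
def coboundariesIn (K R : Type) [CommRing K] [Ring R] [Module K R] (n : ℕ) :
    AddSubgroup (cocycles K R n) where
  carrier := {f | IsCoboundary K (f : (Fin n → R) → R)}
  add_mem' := by
    intro u v hu hv
    match n, u, v, hu, hv with
    | 0, u, v, hu, hv =>
      show ((u + v : cocycles K R 0) : (Fin 0 → R) → R) = 0
      have : ((u + v : cocycles K R 0) : (Fin 0 → R) → R) = (u : _) + (v : _) := rfl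
      rw [this, show ((u : (Fin 0 → R) → R)) = 0 from hu, show ((v : (Fin 0 → R) → R)) = 0 from hv,
        add_zero]
    | (m + 1), u, v, hu, hv =>
      obtain ⟨h, hm, he⟩ := hu
      obtain ⟨h', hm', he'⟩ := hv
      exact ⟨h + h', hm.add hm', by
        show ((u : _) + (v : _) : (Fin (m+1) → R) → R) = _
        rw [he, he', hd_add]⟩
  zero_mem' := by
    match n with
    | 0 => rfl
    | m + 1 => exact ⟨0, IsMultilinearCochain.zero, by rw [hd_zero]; rfl⟩
  neg_mem' := by
    intro u hu
    match n, u, hu with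
    | 0, u, hu =>
      show ((-u : cocycles K R 0) : (Fin 0 → R) → R) = 0
      have : ((-u : cocycles K R 0) : (Fin 0 → R) → R) = -(u : _) := rfl
      rw [this, show ((u : (Fin 0 → R) → R)) = 0 from hu, neg_zero]
    | (m + 1), u, hu =>
      obtain ⟨h, hm, he⟩ := hu
      exact ⟨-h, hm.neg, by
        show (-(u : (Fin (m+1) → R) → R)) = _
        rw [he, hd_neg]⟩

/-- The `n`-th Hochschild cohomology group of the `K`-algebra `R` (with coefficients
in `R`), computed by multilinear (bar) cochains. -/
def HH (K R : Type) [CommRing K] [Ring R] [Module K R] (n : ℕ) : Type :=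
  cocycles K R n ⧸ coboundariesIn K R n

instance (K R : Type) [CommRing K] [Ring R] [Module K R] (n : ℕ) :
    AddCommGroup (HH K R n) :=
  inferInstanceAs (AddCommGroup (cocycles K R n ⧸ coboundariesIn K R n))

end HochschildLaws


section Invariants

variable (K : Type) [CommRing K] (S : Type) [CommRing S] [Algebra K S]
variable (G : Type) [Group G] [MulSemiringAction G S] [SMulCommClass G K S]

/-- The invariant ring `R = S^G`, as a subalgebra of `S`. -/
def invariants : Subalgebra K S where
  carrier := {s | ∀ g : G, g • s = s}
  mul_mem' := fun hx hy g => by rw [smul_mul', hx g, hy g]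
  add_mem' := fun hx hy g => by rw [smul_add, hx g, hy g]
  algebraMap_mem' := fun k g => by
    rw [Algebra.algebraMap_eq_smul_one, smul_comm, smul_one]

/-- The action of `G` on Hochschild cochains of `S` over `K`. -/
def mapG (g : G) {n : ℕ} (f : (Fin n → S) → S) : (Fin n → S) → S :=
  fun a => g • f (fun i => g⁻¹ • a i)

/-- The Noether (homological) different `θ(S/R)` of `S` over its invariant ring `R`:
the image under the multiplication map `μ : S ⊗_R S → S` of the `S`-centralizer
`(S ⊗_R S)^S = {x | ∀ s, (s ⊗ 1)·x = (1 ⊗ s)·x}`; an ideal of `S`. -/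
def noetherDifferent : Ideal S :=
  Ideal.span ((Algebra.TensorProduct.lmul' (R := ↥(invariants K S G)) (S := S)) ''
    {x : TensorProduct (↥(invariants K S G)) S S | ∀ s : S,
      (Algebra.TensorProduct.includeLeftRingHom (R := ↥(invariants K S G)) (A := S) (B := S)) s
          * x =
        (Algebra.TensorProduct.includeRight (R := ↥(invariants K S G)) (A := S) (B := S)) s * x})

/-- The depth `depth(θ(S/R), S)` of the Noether different on `S`, measured through the
vanishing of `Ext^i_S(S/θ(S/R), S)`. -/
def noetherDepth : ℕ∞ :=
  sInf {i : ℕ∞ | ∃ n : ℕ, i = n ∧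
    ¬ Subsingleton (Abelian.Ext
        (ModuleCat.of S (S ⧸ noetherDifferent K S G))
        (ModuleCat.of S S) n)}

end Invariants

/-- The fixed points of a family of additive endomorphisms, as a subgroup. -/
def fixedSubgroup {G H : Type} [AddCommGroup H] (ρ : G → (H →+ H)) : AddSubgroup H where
  carrier := {x | ∀ g, ρ g x = x}
  add_mem' := fun hx hy g => by rw [map_add, hx g, hy g]
  zero_mem' := fun g => map_zero _
  neg_mem' := fun hx g => by rw [map_neg, hx g]

/-!
Restricting a cochain to `R = S^G` and averaging its values gives a map `Hoch(S)^G → Hoch(R)`.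
Since `R` is a retract of `S`, this map is bijective as soon as the *relative* cochains of `S`,
those vanishing on tuples from `R`, have no cohomology.

Let `y = ∑ aᵢ bᵢ` come from a central element `∑ aᵢ ⊗ bᵢ` of `S ⊗[R] S`. Because the action is
outer, the twisted products `∑ aᵢ (g • bᵢ)` vanish for `g ≠ 1`, whence `∑ aᵢ tr (bᵢ s) = y s`.
This yields a homotopy on coinduced coefficients up to the factor `y`, and the tensor itself kills
the derivations that vanish on `R`; by dimension shifting, `yⁿ⁺¹` kills the relative cohomology in
degree `n + 1`. If `y` is regular on the coefficients `N`, passing from `N` to `N / yⁿ⁺¹ N` trades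
one degree of cohomology for one unit of depth, so sufficient depth makes relative cohomology
vanish.
-/

/-! ### Multilinear cochains -/

section Cochains

variable {K : Type} [CommRing K] {S T U : Type} [CommRing S] [Algebra K S] [CommRing T]
  [Algebra K T] [CommRing U] [Algebra K U] {N N' N'' : Type} [AddCommGroup N] [Module K N]
  [AddCommGroup N'] [Module K N'] [AddCommGroup N''] [Module K N''] {n : ℕ}

/-- The `K`-multilinear Hochschild cochains of degree `n` of `S` with values in `N`. -/
abbrev Cochain (K S N : Type) [CommRing K] [CommRing S] [Algebra K S] [AddCommGroup N]
    [Module K N] (n : ℕ) : Type :=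
  MultilinearMap K (fun _ : Fin n => S) N

namespace Cochain

/-- Functoriality of cochains, contravariant in the algebra and covariant in the coefficients. -/
def transport (φ : T →ₗ[K] S) (p : N →ₗ[K] N') : Cochain K S N n →ₗ[K] Cochain K T N' n :=
  LinearMap.compMultilinearMapₗ K p ∘ₗ MultilinearMap.compLinearMapₗ fun _ => φ

@[simp]
lemma transport_apply (φ : T →ₗ[K] S) (p : N →ₗ[K] N') (F : Cochain K S N n) (b : Fin n → T) :
    transport φ p F b = p (F fun i => φ (b i)) :=
  rfl

lemma transport_transport (ψ : U →ₗ[K] T) (φ : T →ₗ[K] S) (q : N' →ₗ[K] N'') (p : N →ₗ[K] N')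
    (F : Cochain K S N n) : transport ψ q (transport φ p F) = transport (φ ∘ₗ ψ) (q ∘ₗ p) F :=
  rfl

/-- Cochains of degree `n + 1` as cochains of degree `n` with values in `Hom_K(S, N)`, by
separating the first variable. -/
def curry : Cochain K S N (n + 1) ≃ₗ[K] Cochain K S (S →ₗ[K] N) n :=
  (MultilinearMap.domDomCongrLinearEquiv K K S N (finRotate (n + 1)).symm).trans
    (multilinearCurryRightEquiv K (fun _ => S) N)

@[simp]
lemma curry_apply (F : Cochain K S N (n + 1)) (b : Fin n → S) (t : S) :
    curry F b t = F (Fin.cons t b) := by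
  refine congrArg F (funext fun i => ?_)
  simp only [Fin.snoc_eq_cons_rotate, Equiv.apply_symm_apply]

@[simp]
lemma curry_symm_apply (F : Cochain K S (S →ₗ[K] N) n) (b : Fin (n + 1) → S) :
    curry.symm F b = F (Fin.tail b) (b 0) := by
  rw [← LinearEquiv.apply_symm_apply curry F, curry_apply, Fin.cons_self_tail,
    LinearEquiv.apply_symm_apply]

lemma curry_transport (φ : T →ₗ[K] S) (p : N →ₗ[K] N') (F : Cochain K S N (n + 1)) :
    curry (transport φ p F) =
      transport φ (LinearMap.lcomp K N' φ ∘ₗ LinearMap.compRight K p) (curry F) := by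
  ext b t
  simp only [curry_apply, transport_apply, LinearMap.comp_apply, LinearMap.lcomp_apply',
    LinearMap.compRight_apply]
  exact congrArg (fun a => p (F a)) (funext fun i => Fin.cases rfl (fun _ => rfl) i)

end Cochain

open Cochain

/-- A `K`-central bimodule over the commutative `K`-algebra `S`, given by its two commuting
actions. -/
structure Bimodule (K S N : Type) [CommRing K] [CommRing S] [Algebra K S] [AddCommGroup N]
    [Module K N] where
  left : S →ₐ[K] Module.End K N
  right : S →ₐ[K] Module.End K N
  commute : ∀ s t, Commute (left s) (right t)

namespace Bimodule

/-- A module, with both actions equal. -/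
def symmetric (K S N : Type) [CommRing K] [CommRing S] [Algebra K S] [AddCommGroup N]
    [Module K N] [Module S N] [IsScalarTower K S N] : Bimodule K S N where
  left := Algebra.lsmul K K N
  right := Algebra.lsmul K K N
  commute s t := (Commute.all s t).map (Algebra.lsmul K K N)

/-- Restriction of both actions along an algebra homomorphism. -/
def restrict (B : Bimodule K S N) (φ : T →ₐ[K] S) : Bimodule K T N where
  left := B.left.comp φ
  right := B.right.comp φ
  commute _ _ := B.commute _ _

/-- The bimodule `Hom_K(S, N)` on which `s` acts on the left through the argument and on the right
through the values. Its cochains are the cochains of `N` in one degree more. -/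
def coinduced (B : Bimodule K S N) : Bimodule K S (S →ₗ[K] N) where
  left := AlgHom.ofLinearMap ((LinearMap.llcomp K S S N).flip ∘ₗ LinearMap.mul K S)
    (by ext; simp) fun s t => by ext; simp [mul_left_comm, mul_comm]
  right := AlgHom.ofLinearMap (LinearMap.llcomp K S N N ∘ₗ B.right.toLinearMap)
    (by ext; simp) fun s t => by ext; simp
  commute _ _ := rfl

@[simp]
lemma coinduced_left_apply (B : Bimodule K S N) (s : S) (ψ : S →ₗ[K] N) (a : S) :
    B.coinduced.left s ψ a = ψ (s * a) :=
  rfl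

@[simp]
lemma coinduced_right_apply (B : Bimodule K S N) (s : S) (ψ : S →ₗ[K] N) (a : S) :
    B.coinduced.right s ψ a = B.right s (ψ a) :=
  rfl

lemma left_comm_right (B : Bimodule K S N) (s t : S) (x : N) :
    B.left s (B.right t x) = B.right t (B.left s x) :=
  LinearMap.congr_fun (B.commute s t) x

/-- A linear map intertwining the actions of `T` and `S` along an algebra homomorphism. -/
structure Intertwines (B : Bimodule K S N) (B' : Bimodule K T N') (φ : T →ₐ[K] S)
    (p : N →ₗ[K] N') : Prop where
  left : ∀ t x, p (B.left (φ t) x) = B'.left t (p x)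
  right : ∀ t x, p (B.right (φ t) x) = B'.right t (p x)

lemma Intertwines.coinduced {B : Bimodule K S N} {B' : Bimodule K T N'} {φ : T →ₐ[K] S}
    {p : N →ₗ[K] N'} (h : B.Intertwines B' φ p) :
    B.coinduced.Intertwines B'.coinduced φ
      (LinearMap.lcomp K N' φ.toLinearMap ∘ₗ LinearMap.compRight K p) where
  left t ψ := by ext a; simp
  right t ψ := by ext a; simp [h.right]

lemma intertwines_restrict (B : Bimodule K S N) (φ : T →ₐ[K] S) :
    B.Intertwines (B.restrict φ) φ LinearMap.id :=
  ⟨fun _ _ => rfl, fun _ _ => rfl⟩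

/-- The embedding `x ↦ (s ↦ s x)` of a bimodule into its coinduced bimodule. -/
def unit (B : Bimodule K S N) : N →ₗ[K] S →ₗ[K] N :=
  B.left.toLinearMap.flip

@[simp]
lemma unit_apply (B : Bimodule K S N) (x : N) (s : S) : B.unit x s = B.left s x :=
  rfl

lemma unit_intertwines (B : Bimodule K S N) :
    B.Intertwines B.coinduced (AlgHom.id K S) B.unit where
  left t x := by ext a; simp [mul_comm t a]
  right t x := by ext a; simp [left_comm_right]

lemma unit_natural {B : Bimodule K S N} {B' : Bimodule K T N'} {φ : T →ₐ[K] S}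
    {p : N →ₗ[K] N'} (h : B.Intertwines B' φ p) :
    (LinearMap.lcomp K N' φ.toLinearMap ∘ₗ LinearMap.compRight K p) ∘ₗ B.unit = B'.unit ∘ₗ p := by
  ext x t
  simp [h.left]

/-- The Hochschild differential, defined by separating the first variable: under `curry` the
terms other than the leading one are those of the differential of the coinduced bimodule. -/
def d : ∀ {n : ℕ} {N : Type} [AddCommGroup N] [Module K N], Bimodule K S N →
    (Cochain K S N n →ₗ[K] Cochain K S N (n + 1))
  | 0, _, _, _, B => curry.symm.toLinearMap ∘ₗ
      transport LinearMap.id (B.unit - B.right.toLinearMap.flip)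
  | _ + 1, _, _, _, B => curry.symm.toLinearMap ∘ₗ
      (transport LinearMap.id B.unit - B.coinduced.d ∘ₗ curry.toLinearMap)

lemma d_zero_apply (B : Bimodule K S N) (F : Cochain K S N 0) (a : Fin 1 → S) (b : Fin 0 → S) :
    B.d F a = B.left (a 0) (F b) - B.right (a 0) (F b) := by
  rw [Subsingleton.elim b (Fin.tail a)]
  exact curry_symm_apply _ a

lemma curry_d (B : Bimodule K S N) (F : Cochain K S N (n + 1)) :
    curry (B.d F) = transport LinearMap.id B.unit F - B.coinduced.d (curry F) :=
  LinearEquiv.apply_symm_apply curry _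

lemma d_transport {B : Bimodule K S N} {B' : Bimodule K T N'} {φ : T →ₐ[K] S}
    {p : N →ₗ[K] N'} (h : B.Intertwines B' φ p) (F : Cochain K S N n) :
    B'.d (transport φ.toLinearMap p F) = transport φ.toLinearMap p (B.d F) := by
  induction n generalizing N N' with
  | zero =>
    ext b
    rw [d_zero_apply B' _ b Fin.elim0, transport_apply, transport_apply,
      d_zero_apply B _ _ fun i => φ (Fin.elim0 i), map_sub]
    exact (congrArg₂ (· - ·) (h.left _ _) (h.right _ _)).symm
  | succ n ih =>
    apply curry.injective
    rw [curry_d, curry_transport, curry_transport, curry_d, ih h.coinduced, map_sub,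
      transport_transport, transport_transport, unit_natural h]
    rfl

lemma d_d (B : Bimodule K S N) (F : Cochain K S N n) : B.d (B.d F) = 0 := by
  induction n generalizing N with
  | zero =>
    apply curry.injective
    ext b t
    have hleft (x : N) : B.left (b 0 * t) x = B.left t (B.left (b 0) x) := by
      rw [mul_comm, map_mul, Module.End.mul_apply]
    have hright (x : N) : B.right (b 0 * t) x = B.right (b 0) (B.right t x) := by
      rw [map_mul, Module.End.mul_apply]
    rw [curry_d, sub_apply, LinearMap.sub_apply, transport_apply, d_zero_apply _ _ b Fin.elim0]
    simp only [LinearMap.sub_apply, coinduced_left_apply, coinduced_right_apply, curry_apply,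
      d_zero_apply B F _ Fin.elim0, unit_apply, Fin.cons_zero, LinearMap.id_apply, map_sub,
      hleft, hright, left_comm_right, map_zero, LinearMap.zero_apply, zero_apply]
    abel
  | succ n ih =>
    have hunit : transport LinearMap.id B.unit (B.d F) =
        B.coinduced.d (transport LinearMap.id B.unit F) :=
      (d_transport B.unit_intertwines F).symm
    apply curry.injective
    rw [curry_d, curry_d, map_sub, hunit, ih, sub_zero, sub_self, map_zero]

end Bimodule

section Explicit

lemma mulConsec_cons_zero (t : S) (a : Fin (n + 1) → S) :
    mulConsec (Fin.cons t a : Fin (n + 2) → S) 0 = Fin.cons (t * a 0) (Fin.tail a) := by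
  ext j
  cases j using Fin.cases <;> simp [mulConsec, Fin.tail]

lemma mulConsec_cons_succ (t : S) (a : Fin (n + 1) → S) (i : Fin n) :
    mulConsec (Fin.cons t a : Fin (n + 2) → S) i.succ = Fin.cons t (mulConsec a i) := by
  ext j
  cases j using Fin.cases <;> simp [mulConsec]

lemma init_cons {A : Type} (t : A) (a : Fin (n + 1) → A) :
    Fin.init (Fin.cons t a : Fin (n + 2) → A) = Fin.cons t (Fin.init a) := by
  ext j
  cases j using Fin.cases <;> simp [Fin.init]

lemma Bimodule.d_apply (B : Bimodule K S N) (F : Cochain K S N n) (a : Fin (n + 1) → S) :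
    B.d F a = B.left (a 0) (F (Fin.tail a))
      + ∑ i : Fin n, (-1 : ℤ) ^ (i.1 + 1) • F (mulConsec a i)
      + (-1 : ℤ) ^ (n + 1) • B.right (a (Fin.last n)) (F (Fin.init a)) := by
  induction n generalizing N with
  | zero =>
    rw [d_zero_apply B F a (Fin.tail a), Subsingleton.elim (Fin.init a) (Fin.tail a)]
    simp [sub_eq_add_neg]
  | succ n ih =>
    rw [← Fin.cons_self_tail a]
    generalize a 0 = t, Fin.tail a = b
    rw [← curry_apply, curry_d, sub_apply, ih, Fin.sum_univ_succ]
    simp only [mulConsec_cons_zero, mulConsec_cons_succ, init_cons, LinearMap.sub_apply,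
      LinearMap.add_apply, LinearMap.sum_apply, LinearMap.smul_apply, LinearMap.neg_apply,
      coinduced_left_apply, coinduced_right_apply, curry_apply, transport_apply, unit_apply,
      LinearMap.id_apply, Fin.cons_zero, Fin.tail_cons, Fin.val_zero, Fin.val_succ, Fin.cons_last,
      pow_succ (-1 : ℤ), pow_zero, mul_neg, mul_one, neg_smul, Finset.sum_neg_distrib, one_smul,
      neg_neg, mul_comm (b 0) t]
    abel

lemma hd_eq_d (F : Cochain K S S n) : hd F = (Bimodule.symmetric K S S).d F := by
  ext a
  rw [Bimodule.d_apply]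
  simp [hd, Bimodule.symmetric, mul_comm]

end Explicit
end Cochains

/-! ### Relative cochains and Galois coordinates -/

section Relative

open Cochain
open scoped TensorProduct

variable {K : Type} [CommRing K] {S : Type} [CommRing S] [Algebra K S] {N N' : Type}
  [AddCommGroup N] [Module K N] [AddCommGroup N'] [Module K N'] {R : Subalgebra K S} {n : ℕ}

namespace Bimodule

/-- The action of the enveloping algebra `S ⊗[K] S` on a bimodule. -/
def act (B : Bimodule K S N) : S ⊗[K] S →ₐ[K] Module.End K N :=
  Algebra.TensorProduct.lift B.left B.right B.commute

@[simp]
lemma act_tmul (B : Bimodule K S N) (s t : S) (x : N) :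
    B.act (s ⊗ₜ t) x = B.left s (B.right t x) := by
  simp [act]

lemma act_tmul_one (B : Bimodule K S N) (s : S) : B.act (s ⊗ₜ 1) = B.left s := by
  ext x
  simp

lemma act_natural {B : Bimodule K S N} {B' : Bimodule K S N'} {p : N →ₗ[K] N'}
    (h : B.Intertwines B' (AlgHom.id K S) p) (z : S ⊗[K] S) : p ∘ₗ B.act z = B'.act z ∘ₗ p := by
  ext x
  induction z with
  | zero => simp
  | tmul s t =>
    simp only [LinearMap.comp_apply, act_tmul]
    exact (h.left s _).trans (congrArg _ (h.right t x))
  | add z w hz hw => simp_all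

lemma act_intertwines (B : Bimodule K S N) (z : S ⊗[K] S) :
    B.Intertwines B (AlgHom.id K S) (B.act z) where
  left t x := by
    have := LinearMap.congr_fun (((Commute.all z (t ⊗ₜ 1)).map B.act).eq) x
    simpa using this
  right t x := by
    have := LinearMap.congr_fun (((Commute.all z (1 ⊗ₜ t)).map B.act).eq) x
    simpa using this

lemma transport_act_natural {B : Bimodule K S N} {B' : Bimodule K S N'} {p : N →ₗ[K] N'}
    (h : B.Intertwines B' (AlgHom.id K S) p) (z : S ⊗[K] S) (F : Cochain K S N n) :
    transport LinearMap.id p (transport LinearMap.id (B.act z) F) =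
      transport LinearMap.id (B'.act z) (transport LinearMap.id p F) :=
  congrArg (fun q => transport LinearMap.id q F) (act_natural h z)

lemma d_transport_act (B : Bimodule K S N) (z : S ⊗[K] S) (F : Cochain K S N n) :
    B.d (transport LinearMap.id (B.act z) F) = transport LinearMap.id (B.act z) (B.d F) :=
  d_transport (B.act_intertwines z) F

lemma transport_act_mul (B : Bimodule K S N) (z w : S ⊗[K] S) (F : Cochain K S N n) :
    transport LinearMap.id (B.act (z * w)) F =
      transport LinearMap.id (B.act z) (transport LinearMap.id (B.act w) F) := by
  rw [map_mul]
  rfl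

end Bimodule

namespace Cochain

/-- The cochains that vanish on tuples from the subalgebra `R`. -/
def relative (R : Subalgebra K S) (N : Type) [AddCommGroup N] [Module K N] (n : ℕ) :
    Submodule K (Cochain K S N n) :=
  LinearMap.ker (transport R.val.toLinearMap LinearMap.id)

lemma mem_relative_iff {F : Cochain K S N n} :
    F ∈ relative R N n ↔ ∀ b : Fin n → R, F (fun i => b i) = 0 := by
  simp [relative, MultilinearMap.ext_iff]

lemma transport_mem_relative {F : Cochain K S N n} (hF : F ∈ relative R N n) (p : N →ₗ[K] N') :
    transport LinearMap.id p F ∈ relative R N' n := by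
  rw [mem_relative_iff] at hF ⊢
  intro b
  exact (congrArg p (hF b)).trans (map_zero p)

lemma d_mem_relative (B : Bimodule K S N) {F : Cochain K S N n} (hF : F ∈ relative R N n) :
    B.d F ∈ relative R N (n + 1) := by
  have hres : transport R.val.toLinearMap LinearMap.id F = 0 := hF
  exact (Bimodule.d_transport (B.intertwines_restrict R.val) F).symm.trans (by rw [hres, map_zero])

lemma eq_zero_of_mem_relative {F : Cochain K S N 0} (hF : F ∈ relative R N 0) : F = 0 := by
  ext b
  rw [Subsingleton.elim b fun i => (Fin.elim0 i : R)]
  exact mem_relative_iff.1 hF _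

lemma curry_apply_eq_zero {F : Cochain K S N (n + 1)} (hF : F ∈ relative R N (n + 1))
    (b : Fin n → R) (t : R) : curry F (fun i => b i) t = 0 := by
  rw [curry_apply]
  convert mem_relative_iff.1 hF (Fin.cons t b) using 2
  ext i
  cases i using Fin.cases <;> rfl

end Cochain

/-- The relative cochains of a bimodule have no cohomology in degree `n + 1`. -/
def Bimodule.RelativelyExact (B : Bimodule K S N) (R : Subalgebra K S) (n : ℕ) : Prop :=
  ∀ f ∈ relative R N (n + 1), B.d f = 0 → ∃ g ∈ relative R N n, B.d g = f

/-- Approximate Galois coordinates for `S` over `R`: elements `a i`, `b i` forming an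
`S`-central element of `S ⊗[R] S` with product `y`, together with `R`-linear forms `proj i`
dual to `a i` up to the factor `y`. For `y = 1` these are Galois coordinates. -/
structure GaloisCoordinates (R : Subalgebra K S) (y : S) where
  card : ℕ
  a : Fin card → S
  b : Fin card → S
  proj : Fin card → S →ₗ[R] R
  sum_mul_proj : ∀ s, ∑ i, a i * proj i s = y * s
  sum_tmul_comm : ∀ s, ∑ i, (s * a i) ⊗ₜ[R] b i = ∑ i, a i ⊗ₜ[R] (s * b i)
  sum_mul : ∑ i, a i * b i = y

namespace GaloisCoordinates

variable {y : S} (c : GaloisCoordinates R y)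

/-- The Casimir element `∑ aᵢ ⊗ bᵢ`, lifted to the enveloping algebra over `K`. -/
def casimir : S ⊗[K] S :=
  ∑ i, c.a i ⊗ₜ c.b i

lemma act_casimir_derivation (B : Bimodule K S N) (D : S →ₗ[K] N)
    (hD : ∀ s t, D (s * t) = B.left s (D t) + B.right t (D s)) (hR : ∀ r : R, D r = 0) (s : S) :
    B.act c.casimir (D s) = 0 := by
  let Φ : S ⊗[R] S →+ N := TensorProduct.liftAddHom
    (AddMonoidHom.mk' (fun u => (B.right.toLinearMap.flip (D u)).toAddMonoidHom)
      fun u v => by ext; simp)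
    fun r u v => by
      have hru : D (r • u) = B.right r (D u) := by
        rw [Subalgebra.smul_def, smul_eq_mul, mul_comm, hD, hR, map_zero, zero_add]
      change B.right v (D (r • u)) = B.right (r • v) (D u)
      rw [hru, Subalgebra.smul_def, smul_eq_mul, mul_comm, map_mul, Module.End.mul_apply]
  have hΦ (u v : S) : Φ (u ⊗ₜ v) = B.right v (D u) := rfl
  have hcentral := congrArg Φ (c.sum_tmul_comm s)
  simp only [map_sum, hΦ, mul_comm s, hD, map_add, Finset.sum_add_distrib, map_mul,
    Module.End.mul_apply, add_eq_right] at hcentral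
  simpa only [casimir, map_sum, LinearMap.sum_apply, Bimodule.act_tmul, Bimodule.left_comm_right]
    using hcentral

/-- The contracting homotopy of coinduced cochains in the first variable, up to the factor `y`. -/
def homotopy (N : Type) [AddCommGroup N] [Module K N] : (S →ₗ[K] S →ₗ[K] N) →ₗ[K] S →ₗ[K] N :=
  ∑ i, LinearMap.lcomp K N (R.val.toLinearMap ∘ₗ (c.proj i).restrictScalars K) ∘ₗ
    LinearMap.compRight K (LinearMap.applyₗ (c.a i))

lemma homotopy_apply (ψ : S →ₗ[K] S →ₗ[K] N) (s : S) :
    c.homotopy N ψ s = ∑ i, ψ (c.proj i s) (c.a i) := by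
  simp [homotopy]

lemma homotopy_unit (B : Bimodule K S N) (ψ : S →ₗ[K] N) :
    c.homotopy N (B.coinduced.unit ψ) = B.coinduced.left y ψ := by
  ext s
  simp only [homotopy_apply, Bimodule.unit_apply, Bimodule.coinduced_left_apply, ← map_sum,
    ← c.sum_mul_proj, mul_comm]

lemma homotopy_intertwines (B : Bimodule K S N) :
    B.coinduced.coinduced.Intertwines (B.coinduced.restrict R.val) R.val (c.homotopy N) where
  left r ψ := by
    ext s
    have hr (i) : (c.proj i ((r : S) * s) : S) = r * c.proj i s :=
      congrArg Subtype.val ((c.proj i).map_smul r s)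
    change _ = c.homotopy N ψ ((r : S) * s)
    simp [homotopy_apply, hr]
  right r ψ := by
    ext s
    change _ = B.right r (c.homotopy N ψ s)
    simp [homotopy_apply]

lemma exists_smul_sub_d_mem_relative (c : GaloisCoordinates R y) {π : S →ₗ[K] R}
    (hπ : ∀ r : R, π r = r) (B : Bimodule K S N) (F : Cochain K S (S →ₗ[K] N) (n + 1))
    (hF : B.coinduced.d F ∈ relative R (S →ₗ[K] N) (n + 2)) :
    ∃ E : Cochain K S (S →ₗ[K] N) n,
      transport LinearMap.id (B.coinduced.act (y ⊗ₜ 1)) F - B.coinduced.d E ∈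
        relative R _ (n + 1) := by
  let H : Cochain K R (S →ₗ[K] N) n := transport R.val.toLinearMap (c.homotopy N) (curry F)
  refine ⟨transport π LinearMap.id H, ?_⟩
  have hH : transport R.val.toLinearMap LinearMap.id (transport π LinearMap.id H) = H := by
    ext b
    simp [hπ]
  have hunit : transport R.val.toLinearMap (c.homotopy N)
      (transport LinearMap.id B.coinduced.unit F) =
      transport R.val.toLinearMap (B.coinduced.act (y ⊗ₜ 1)) F := by
    ext1 b
    exact (c.homotopy_unit B _).trans (LinearMap.congr_fun (B.coinduced.act_tmul_one y) _).symm
  have hcurry : transport R.val.toLinearMap (c.homotopy N) (curry (B.coinduced.d F)) = 0 := by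
    ext b s
    simp only [transport_apply, homotopy_apply]
    refine Finset.sum_eq_zero fun i _ => ?_
    exact LinearMap.congr_fun (curry_apply_eq_zero hF b (c.proj i s)) (c.a i)
  rw [Bimodule.curry_d, map_sub (transport _ (c.homotopy N)), hunit,
    ← Bimodule.d_transport (c.homotopy_intertwines B)] at hcurry
  rw [relative, LinearMap.mem_ker, map_sub,
    ← Bimodule.d_transport (B.coinduced.intertwines_restrict R.val), hH]
  exact hcurry

end GaloisCoordinates
end Relative

/-! ### Dimension shifting -/

section Shift

open Cochain
open scoped TensorProduct

variable {K : Type} [CommRing K] {S : Type} [CommRing S] [Algebra K S] {N : Type}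
  [AddCommGroup N] [Module K N] {R : Subalgebra K S} {n : ℕ}

namespace Bimodule

/-- The linear maps `S → N` vanishing at `1`: a complement of `N` in its coinduced bimodule. -/
abbrev Shift (K S N : Type) [CommRing K] [CommRing S] [Algebra K S] [AddCommGroup N]
    [Module K N] : Type :=
  LinearMap.ker (LinearMap.applyₗ (1 : S) : (S →ₗ[K] N) →ₗ[K] N)

/-- The projection of the coinduced bimodule onto `Shift K S N` along `B.unit`. -/
def toShift (B : Bimodule K S N) : (S →ₗ[K] N) →ₗ[K] Shift K S N :=
  (LinearMap.id - B.unit ∘ₗ LinearMap.applyₗ 1).codRestrict _ fun ψ => by simp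

lemma coe_toShift (B : Bimodule K S N) (ψ : S →ₗ[K] N) :
    (B.toShift ψ : S →ₗ[K] N) = ψ - B.unit (ψ 1) :=
  rfl

lemma toShift_coe (B : Bimodule K S N) (ψ : Shift K S N) : B.toShift ψ = ψ := by
  ext1
  rw [coe_toShift, show (ψ : S →ₗ[K] N) 1 = 0 from ψ.2, map_zero, sub_zero]

lemma toShift_unit (B : Bimodule K S N) (x : N) : B.toShift (B.unit x) = 0 := by
  ext s
  simp [coe_toShift]

lemma toShift_eq_zero_iff (B : Bimodule K S N) (ψ : S →ₗ[K] N) :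
    B.toShift ψ = 0 ↔ ψ = B.unit (ψ 1) := by
  rw [← sub_eq_zero (a := ψ), ← coe_toShift, ZeroMemClass.coe_eq_zero]

lemma toShift_apply_toShift (B : Bimodule K S N) {A : Module.End K (S →ₗ[K] N)}
    (hA : ∀ x, B.toShift (A (B.unit x)) = 0) (ψ : S →ₗ[K] N) :
    B.toShift (A (B.toShift ψ)) = B.toShift (A ψ) := by
  rw [coe_toShift, map_sub, map_sub, hA, sub_zero]

/-- An action on the coinduced bimodule that preserves the image of `B.unit` descends to
`Shift K S N`. -/
def shiftAction (B : Bimodule K S N) (A : S →ₐ[K] Module.End K (S →ₗ[K] N))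
    (hA : ∀ s x, B.toShift (A s (B.unit x)) = 0) : S →ₐ[K] Module.End K (Shift K S N) :=
  AlgHom.ofLinearMap
    { toFun := fun s => B.toShift ∘ₗ A s ∘ₗ Submodule.subtype _
      map_add' := fun s t => by ext; simp
      map_smul' := fun k s => by ext; simp }
    (by ext; simp [toShift_coe]) fun s t => by ext ψ : 1; simp [toShift_apply_toShift, hA]

lemma toShift_left_unit (B : Bimodule K S N) (s : S) (x : N) :
    B.toShift (B.coinduced.left s (B.unit x)) = 0 :=
  (congrArg B.toShift (B.unit_intertwines.left s x)).symm.trans (B.toShift_unit _)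

lemma toShift_right_unit (B : Bimodule K S N) (s : S) (x : N) :
    B.toShift (B.coinduced.right s (B.unit x)) = 0 :=
  (congrArg B.toShift (B.unit_intertwines.right s x)).symm.trans (B.toShift_unit _)

/-- The cokernel of `B.unit`, realised on a `K`-linear complement. -/
def shift (B : Bimodule K S N) : Bimodule K S (Shift K S N) where
  left := B.shiftAction B.coinduced.left B.toShift_left_unit
  right := B.shiftAction B.coinduced.right B.toShift_right_unit
  commute s t := by
    ext ψ : 1
    simp [shiftAction, toShift_apply_toShift, toShift_left_unit, toShift_right_unit,
      left_comm_right]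

lemma toShift_intertwines (B : Bimodule K S N) :
    B.coinduced.Intertwines B.shift (AlgHom.id K S) B.toShift where
  left s ψ := (B.toShift_apply_toShift (B.toShift_left_unit s) ψ).symm
  right s ψ := (B.toShift_apply_toShift (B.toShift_right_unit s) ψ).symm

lemma transport_unit_injective (B : Bimodule K S N) :
    Function.Injective (transport LinearMap.id B.unit : Cochain K S N n → _) := by
  intro F F' hFF'
  ext b
  simpa using LinearMap.congr_fun (MultilinearMap.congr_fun hFF' b) 1

/-- A relative primitive of the projection of `G` to the shift bimodule corrects `G` to a relative
cochain with values in the original bimodule. -/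
lemma exists_relative_unit_eq (B : Bimodule K S N) {G : Cochain K S (S →ₗ[K] N) (n + 1)}
    (hG : G ∈ relative R _ (n + 1)) {E : Cochain K S (Shift K S N) n} (hE : E ∈ relative R _ n)
    (hd : B.shift.d E = transport LinearMap.id B.toShift G) :
    ∃ g ∈ relative R N (n + 1), transport LinearMap.id B.unit g =
      G - B.coinduced.d (transport LinearMap.id (Submodule.subtype _) E) := by
  set G' := G - B.coinduced.d (transport LinearMap.id (Submodule.subtype _) E) with hG'
  have hrel : G' ∈ relative R _ (n + 1) :=
    Submodule.sub_mem _ hG (d_mem_relative _ (transport_mem_relative hE _))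
  have hproj : transport LinearMap.id B.toShift G' = 0 := by
    have hE' : transport LinearMap.id B.toShift
        (transport LinearMap.id (Submodule.subtype _) E) = E := by
      ext1 b
      exact B.toShift_coe _
    have hnat := d_transport B.toShift_intertwines
      (transport LinearMap.id (Submodule.subtype _) E)
    rw [hG', map_sub, ← hd, sub_eq_zero]
    exact (congrArg B.shift.d hE').symm.trans hnat
  refine ⟨_, transport_mem_relative hrel (LinearMap.applyₗ 1), ?_⟩
  ext1 b
  exact ((B.toShift_eq_zero_iff _).1 (MultilinearMap.congr_fun hproj b)).symm

end Bimodule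

namespace GaloisCoordinates

open Bimodule

variable {y : S}

lemma transport_act_casimir_eq_zero (c : GaloisCoordinates R y) (B : Bimodule K S N)
    {f : Cochain K S N 1} (hf : f ∈ relative R N 1) (hcocycle : B.d f = 0) :
    transport LinearMap.id (B.act c.casimir) f = 0 := by
  let D : S →ₗ[K] N := curry f Fin.elim0
  have hDf (b : Fin 1 → S) : f b = D (b 0) := by
    rw [← Fin.cons_self_tail b, Subsingleton.elim (Fin.tail b) Fin.elim0, ← curry_apply]
    rfl
  have hR (r : R) : D r = 0 := by
    rw [← hDf fun _ => r]
    exact mem_relative_iff.1 hf _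
  have hD (s t : S) : D (s * t) = B.left s (D t) + B.right t (D s) := by
    have hcurry : B.left s (D t) - (D (s * t) - B.right t (D s)) = 0 := by
      have := LinearMap.congr_fun (MultilinearMap.congr_fun
        ((B.curry_d f).symm.trans (by rw [hcocycle, map_zero])) fun _ => t) s
      rw [sub_apply, d_zero_apply _ _ _ Fin.elim0, transport_apply] at this
      rw [mul_comm s]
      simpa [hDf] using this
    rw [← sub_eq_zero, ← neg_eq_zero, ← hcurry]
    abel
  ext b
  rw [transport_apply, hDf, c.act_casimir_derivation B D hD hR]
  rfl

theorem exists_relative_d_eq (c : GaloisCoordinates R y) {π : S →ₗ[K] R} (hπ : ∀ r : R, π r = r)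
    (B : Bimodule K S N) {f : Cochain K S N (n + 1)} (hf : f ∈ relative R N (n + 1))
    (hcocycle : B.d f = 0) :
    ∃ g ∈ relative R N n,
      B.d g = transport LinearMap.id (B.act ((y ⊗ₜ 1) ^ n * c.casimir)) f := by
  induction n generalizing N with
  | zero =>
    refine ⟨0, Submodule.zero_mem _, ?_⟩
    rw [pow_zero, one_mul, c.transport_act_casimir_eq_zero B hf hcocycle, map_zero]
  | succ n ih =>
    set z : S ⊗[K] S := (y ⊗ₜ 1) ^ n * c.casimir
    have hd : B.coinduced.d (curry f) = transport LinearMap.id B.unit f :=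
      (sub_eq_zero.1 ((B.curry_d f).symm.trans (by rw [hcocycle, map_zero]))).symm
    obtain ⟨E, hE⟩ := c.exists_smul_sub_d_mem_relative hπ B (curry f)
      (hd ▸ transport_mem_relative hf B.unit)
    set G := transport LinearMap.id (B.coinduced.act (y ⊗ₜ 1)) (curry f) - B.coinduced.d E
    have hdG : B.coinduced.d G =
        transport LinearMap.id B.unit (transport LinearMap.id (B.act (y ⊗ₜ 1)) f) := by
      rw [map_sub, d_d, sub_zero, d_transport_act, hd, transport_act_natural B.unit_intertwines]
    have hdG' : B.shift.d (transport LinearMap.id B.toShift G) = 0 := by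
      refine (d_transport B.toShift_intertwines G).trans ?_
      ext1 b
      rw [hdG]
      exact B.toShift_unit _
    obtain ⟨E', hE', hdE'⟩ := ih B.shift (transport_mem_relative hE B.toShift) hdG'
    rw [← transport_act_natural B.toShift_intertwines] at hdE'
    obtain ⟨g, hg, hunit⟩ := B.exists_relative_unit_eq (transport_mem_relative hE _) hE' hdE'
    refine ⟨g, hg, B.transport_unit_injective ?_⟩
    calc transport LinearMap.id B.unit (B.d g)
        = B.coinduced.d (transport LinearMap.id B.unit g) :=
          (d_transport B.unit_intertwines g).symm
      _ = transport LinearMap.id (B.coinduced.act z) (B.coinduced.d G) := by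
          rw [hunit, map_sub, d_d, sub_zero, d_transport_act]
      _ = transport LinearMap.id B.unit
            (transport LinearMap.id (B.act ((y ⊗ₜ 1) ^ (n + 1) * c.casimir)) f) := by
          rw [hdG, ← transport_act_natural B.unit_intertwines, ← transport_act_mul, mul_comm,
            ← mul_assoc, pow_succ']

end GaloisCoordinates
end Shift

/-! ### Depth -/

section Depth

open Cochain Abelian
open scoped TensorProduct Pointwise

variable {K : Type} [CommRing K] {S : Type} [CommRing S] [Algebra K S] {N N' : Type}
  [AddCommGroup N] [Module K N] [AddCommGroup N'] [Module K N'] {R : Subalgebra K S} {n : ℕ}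

namespace Cochain

lemma transport_surjective [Module.Projective K S] {p : N →ₗ[K] N'} (hp : Function.Surjective p) :
    Function.Surjective (transport LinearMap.id p : Cochain K S N n → Cochain K S N' n) := by
  induction n generalizing N N' with
  | zero =>
    intro F
    obtain ⟨x, hx⟩ := hp (F Fin.elim0)
    refine ⟨MultilinearMap.constOfIsEmpty K _ x, ?_⟩
    ext b
    rw [Subsingleton.elim b Fin.elim0]
    exact hx
  | succ n ih =>
    intro F
    have hcomp : Function.Surjective (LinearMap.compRight K (M := S) p) :=
      fun ψ => Module.projective_lifting_property p ψ hp
    obtain ⟨E, hE⟩ := ih hcomp (curry F)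
    refine ⟨curry.symm E, curry.injective ?_⟩
    rw [← hE, curry_transport, LinearEquiv.apply_symm_apply]
    rfl

lemma exists_mem_relative_transport_eq [Module.Projective K S] {π : S →ₗ[K] R}
    (hπ : ∀ r : R, π r = r) {p : N →ₗ[K] N'} (hp : Function.Surjective p)
    {F : Cochain K S N' n} (hF : F ∈ relative R N' n) :
    ∃ E ∈ relative R N n, transport LinearMap.id p E = F := by
  obtain ⟨E, rfl⟩ := transport_surjective hp F
  refine ⟨E - transport (R.val.toLinearMap ∘ₗ π) LinearMap.id E, ?_, ?_⟩
  · rw [mem_relative_iff]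
    intro b
    simp [hπ]
  · ext b
    simpa using mem_relative_iff.1 hF fun i => π (b i)

lemma exists_mem_relative_of_apply_mem_range {p : N →ₗ[K] N'} (hp : Function.Injective p)
    {F : Cochain K S N' n} (hF : F ∈ relative R N' n) (hrange : ∀ b, F b ∈ LinearMap.range p) :
    ∃ E ∈ relative R N n, transport LinearMap.id p E = F := by
  refine ⟨(LinearEquiv.ofInjective p hp).symm.toLinearMap.compMultilinearMap
    (F.codRestrict _ hrange), ?_, ?_⟩
  · rw [mem_relative_iff]
    intro b
    apply hp
    simpa [← LinearEquiv.ofInjective_apply (h := hp)] using mem_relative_iff.1 hF b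
  · ext b
    exact congrArg Subtype.val ((LinearEquiv.ofInjective p hp).apply_symm_apply _)

end Cochain

variable [Module S N] [IsScalarTower K S N] [Module S N'] [IsScalarTower K S N']

namespace Bimodule

lemma symmetric_intertwines (p : N →ₗ[S] N') :
    (symmetric K S N).Intertwines (symmetric K S N') (AlgHom.id K S) (p.restrictScalars K) :=
  ⟨p.map_smul, p.map_smul⟩

lemma symmetric_act (z : S ⊗[K] S) (x : N) :
    (symmetric K S N).act z x = Algebra.TensorProduct.lmul' K z • x := by
  induction z with
  | zero => simp
  | tmul s t => simp [symmetric, mul_smul]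
  | add z w hz hw => simp [add_smul, hz, hw]

end Bimodule

lemma GaloisCoordinates.symmetric_act_eq {y : S} (c : GaloisCoordinates R y) (n : ℕ) :
    (Bimodule.symmetric K S N).act ((y ⊗ₜ 1) ^ n * c.casimir) =
      (LinearMap.lsmul S N (y ^ (n + 1))).restrictScalars K := by
  ext x
  rw [Bimodule.symmetric_act]
  simp [casimir, c.sum_mul, pow_succ]

lemma subsingleton_ext_quotSMulTop {M N : Type} [AddCommGroup M] [Module S M] [AddCommGroup N]
    [Module S N] {w : S} (hw : IsSMulRegular N w) {n : ℕ}
    (hext : ∀ i ≤ n + 1, Subsingleton (Ext (ModuleCat.of S M) (ModuleCat.of S N) i)) :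
    ∀ i ≤ n, Subsingleton (Ext (ModuleCat.of S M) (ModuleCat.of S (QuotSMulTop w N)) i) := by
  intro i hi
  have hw' : IsSMulRegular (ModuleCat.of S N) w := hw
  have hzero (j : ℕ) (hj : j ≤ n + 1) :=
    AddCommGrpCat.isZero_of_iff_subsingleton.mpr (hext j hj)
  exact AddCommGrpCat.subsingleton_of_isZero <| ShortComplex.Exact.isZero_of_both_zeros
    (Ext.covariant_sequence_exact₃' _ hw'.smulShortComplex_shortExact i (i + 1) rfl)
    ((hzero i (by omega)).eq_zero_of_src _) ((hzero (i + 1) (by omega)).eq_zero_of_tgt _)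

lemma exists_mem_isSMulRegular_of_subsingleton_ext [IsNoetherianRing S] {N : Type}
    [AddCommGroup N] [Module S N] [Module.Finite S N] {I : Ideal S}
    (hext : Subsingleton (Ext (ModuleCat.of S (S ⧸ I)) (ModuleCat.of S N) 0)) :
    ∃ y ∈ I, IsSMulRegular N y := by
  have : Subsingleton ((S ⧸ I) →ₗ[S] N) :=
    ((Ext.addEquiv₀ (X := ModuleCat.of S (S ⧸ I)) (Y := ModuleCat.of S N)).trans
      ModuleCat.homAddEquiv).symm.subsingleton
  simpa only [Ideal.annihilator_quotient] using IsSMulRegular.subsingleton_linearMap_iff.mp this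

/-- The step of the induction on depth: the primitive `G` of `w f` is corrected by a cocycle `h`
to be divisible by `w`. -/
lemma Bimodule.exists_relative_d_eq_of_smul {w : S} (hw : IsSMulRegular N w)
    {f : Cochain K S N (n + 1)} {G h : Cochain K S N n} (hG : G ∈ relative R N n)
    (hdG : (symmetric K S N).d G =
      transport LinearMap.id ((LinearMap.lsmul S N w).restrictScalars K) f)
    (hh : h ∈ relative R N n) (hdh : (symmetric K S N).d h = 0)
    (hGh : ∀ b, (Submodule.mkQ (w • (⊤ : Submodule S N))) (G b) = Submodule.mkQ _ (h b)) :
    ∃ g ∈ relative R N n, (symmetric K S N).d g = f := by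
  obtain ⟨g, hg, hwg⟩ := exists_mem_relative_of_apply_mem_range (R := R)
    (p := (LinearMap.lsmul S N w).restrictScalars K) hw (Submodule.sub_mem _ hG hh) fun b => by
      obtain ⟨x, -, hx⟩ := (Submodule.Quotient.eq _).1 (hGh b)
      exact ⟨x, hx⟩
  refine ⟨g, hg, ?_⟩
  have hd : transport LinearMap.id ((LinearMap.lsmul S N w).restrictScalars K)
      ((symmetric K S N).d g) =
        transport LinearMap.id ((LinearMap.lsmul S N w).restrictScalars K) f := by
    rw [← hdG, ← sub_zero ((symmetric K S N).d G), ← hdh, ← map_sub, ← hwg]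
    exact (d_transport (symmetric_intertwines (K := K) (LinearMap.lsmul S N w)) g).symm
  ext b
  exact hw (MultilinearMap.congr_fun hd b)

lemma exists_isSMulRegular_d_eq_smul [IsNoetherianRing S] {π : S →ₗ[K] R}
    (hπ : ∀ r : R, π r = r) {I : Ideal S} (hI : ∀ y ∈ I, Nonempty (GaloisCoordinates R y))
    [Module.Finite S N]
    (hext : Subsingleton (Ext (ModuleCat.of S (S ⧸ I)) (ModuleCat.of S N) 0))
    {f : Cochain K S N (n + 1)} (hf : f ∈ relative R N (n + 1))
    (hcocycle : (Bimodule.symmetric K S N).d f = 0) :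
    ∃ w : S, IsSMulRegular N w ∧ ∃ G ∈ relative R N n, (Bimodule.symmetric K S N).d G =
      transport LinearMap.id ((LinearMap.lsmul S N w).restrictScalars K) f := by
  obtain ⟨y, hyI, hy⟩ := exists_mem_isSMulRegular_of_subsingleton_ext (N := N) hext
  obtain ⟨c⟩ := hI y hyI
  refine ⟨y ^ (n + 1), hy.pow _, ?_⟩
  rw [← c.symmetric_act_eq]
  exact c.exists_relative_d_eq hπ _ hf hcocycle

theorem relativelyExact_of_subsingleton_ext [IsNoetherianRing S] [Module.Projective K S]
    {π : S →ₗ[K] R} (hπ : ∀ r : R, π r = r) {I : Ideal S}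
    (hI : ∀ y ∈ I, Nonempty (GaloisCoordinates R y)) [Module.Finite S N]
    (hext : ∀ i ≤ n, Subsingleton (Ext (ModuleCat.of S (S ⧸ I)) (ModuleCat.of S N) i)) :
    (Bimodule.symmetric K S N).RelativelyExact R n := by
  induction n generalizing N with
  | zero =>
    intro f hf hcocycle
    obtain ⟨w, hw, G, hG, hdG⟩ :=
      exists_isSMulRegular_d_eq_smul hπ hI (hext 0 le_rfl) hf hcocycle
    refine Bimodule.exists_relative_d_eq_of_smul hw hG hdG (Submodule.zero_mem _)
      (map_zero _) fun b => ?_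
    rw [eq_zero_of_mem_relative hG]
  | succ n ih =>
    intro f hf hcocycle
    obtain ⟨w, hw, G, hG, hdG⟩ :=
      exists_isSMulRegular_d_eq_smul hπ hI (hext 0 (Nat.zero_le _)) hf hcocycle
    let p := Submodule.mkQ (w • (⊤ : Submodule S N))
    have hpw (x : N) : p (w • x) = 0 := (Submodule.Quotient.mk_eq_zero _).mpr
      (Submodule.smul_mem_pointwise_smul _ _ _ Submodule.mem_top)
    have hp := Bimodule.symmetric_intertwines (K := K) p
    have hp_surj : Function.Surjective p := Submodule.mkQ_surjective _
    have hpG : (Bimodule.symmetric K S _).d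
        (transport LinearMap.id (p.restrictScalars K) G) = 0 := by
      refine (Bimodule.d_transport hp G).trans ?_
      rw [hdG]
      ext b
      exact hpw _
    obtain ⟨E, hE, hdE⟩ := ih (N := QuotSMulTop w N) (subsingleton_ext_quotSMulTop hw hext) _
      (transport_mem_relative hG _) hpG
    obtain ⟨E', hE', rfl⟩ :=
      exists_mem_relative_transport_eq hπ (p := p.restrictScalars K) hp_surj hE
    refine Bimodule.exists_relative_d_eq_of_smul hw hG hdG
      (d_mem_relative (Bimodule.symmetric K S N) hE') (Bimodule.d_d _ _) fun b => ?_
    exact MultilinearMap.congr_fun (hdE.symm.trans (Bimodule.d_transport hp E')) b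

end Depth

/-! ### Invariants of a group action -/

section Invariants

open scoped TensorProduct

variable (K : Type) [CommRing K] (S : Type) [CommRing S] [Algebra K S] (G : Type) [Group G]
  [MulSemiringAction G S] [SMulCommClass G K S]

instance : SMulCommClass G (invariants K S G) S where
  smul_comm g r s := by rw [Subalgebra.smul_def, smul_eq_mul, smul_mul', r.2 g]; rfl

/-- The trace `s ↦ ∑ g, g • s` of a finite group action, with values in the invariants. -/
def trace [Fintype G] : S →ₗ[invariants K S G] invariants K S G where
  toFun s := ⟨∑ g : G, g • s, fun h => by
    simp only [Finset.smul_sum, smul_smul]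
    exact Fintype.sum_equiv (Equiv.mulLeft h) _ _ fun _ => rfl⟩
  map_add' s t := by ext; simp [Finset.sum_add_distrib]
  map_smul' r s := by
    ext
    simp [Subalgebra.smul_def, smul_mul', r.2 _, Finset.mul_sum]

variable {K S G}

lemma coe_trace [Fintype G] (s : S) : (trace K S G s : S) = ∑ g : G, g • s :=
  rfl

variable (K S) in
/-- The multiplication `a ⊗ b ↦ a * (g • b)` twisted by `g`, which kills central tensors when `g`
acts through an outer automorphism. -/
def twistedMul (g : G) : S ⊗[invariants K S G] S →ₐ[invariants K S G] S :=
  Algebra.TensorProduct.lift (AlgHom.id _ S) (MulSemiringAction.toAlgHom (invariants K S G) S g)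
    fun _ _ => Commute.all _ _

@[simp]
lemma twistedMul_tmul (g : G) (a b : S) : twistedMul K S g (a ⊗ₜ b) = a * g • b :=
  rfl

lemma twistedMul_eq_zero {g : G} (hg : ∀ s' : S, s' ≠ 0 → ∃ s : S, s * s' - s' * (g • s) ≠ 0)
    {x : S ⊗[invariants K S G] S} (hx : ∀ s : S, (s ⊗ₜ 1) * x = (1 ⊗ₜ s) * x) :
    twistedMul K S g x = 0 := by
  by_contra hne
  obtain ⟨s, hs⟩ := hg _ hne
  apply hs
  have := congrArg (twistedMul K S g) (hx s)
  simp only [map_mul, twistedMul_tmul, smul_one, one_mul, mul_one] at this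
  rw [this, mul_comm, sub_self]

lemma exists_central_of_mem_noetherDifferent {y : S} (hy : y ∈ noetherDifferent K S G) :
    ∃ x : S ⊗[invariants K S G] S, (∀ s : S, (s ⊗ₜ 1) * x = (1 ⊗ₜ s) * x) ∧
      Algebra.TensorProduct.lmul' (S := S) (invariants K S G) x = y := by
  unfold noetherDifferent at hy
  induction hy using Submodule.span_induction with
  | mem _ h => exact h
  | zero => exact ⟨0, by simp, by simp⟩
  | add y z _ _ hy hz =>
    obtain ⟨x, hx, rfl⟩ := hy
    obtain ⟨x', hx', rfl⟩ := hz
    exact ⟨x + x', fun s => by rw [mul_add, mul_add, hx, hx'], by simp⟩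
  | smul s y _ hy =>
    obtain ⟨x, hx, rfl⟩ := hy
    exact ⟨(s ⊗ₜ 1) * x, fun t => by rw [mul_left_comm, hx, mul_left_comm], by simp⟩

/-- Outerness kills the terms `g ≠ 1` of `∑ i, a i * trace (b i * s)`, which leaves `y * s`. -/
theorem nonempty_galoisCoordinates [Finite G]
    (houter : ∀ g : G, g ≠ 1 → ∀ s' : S, s' ≠ 0 → ∃ s : S, s * s' - s' * (g • s) ≠ 0)
    {y : S} (hy : y ∈ noetherDifferent K S G) :
    Nonempty (GaloisCoordinates (invariants K S G) y) := by
  have := Fintype.ofFinite G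
  obtain ⟨x, hcentral, hmul⟩ := exists_central_of_mem_noetherDifferent hy
  have htwisted (g : G) (hg : g ≠ 1) := twistedMul_eq_zero (houter g hg) hcentral
  obtain ⟨k, a, b, rfl⟩ := TensorProduct.exists_sum_tmul_eq x
  simp only [map_sum, twistedMul_tmul] at htwisted
  simp only [Finset.mul_sum, Algebra.TensorProduct.tmul_mul_tmul, one_mul] at hcentral
  simp only [map_sum, Algebra.TensorProduct.lmul'_apply_tmul] at hmul
  refine ⟨⟨k, a, b, fun i => trace K S G ∘ₗ LinearMap.mulLeft _ (b i), fun s => ?_, hcentral,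
    hmul⟩⟩
  calc ∑ i, a i * (trace K S G (b i * s) : S)
      = ∑ g : G, (∑ i, a i * g • b i) * g • s := by
        simp only [coe_trace, smul_mul', Finset.mul_sum, Finset.sum_mul, mul_assoc]
        exact Finset.sum_comm
    _ = y * s := by
        rw [Fintype.sum_eq_single 1 fun g hg => by rw [htwisted g hg, zero_mul]]
        simp only [one_smul, hmul]

section Average

variable [Fintype G] [Invertible (Fintype.card G : K)]

variable (K S G) in
/-- The Reynolds operator, the average over a finite group of order invertible in `K`. -/
def reynolds : S →ₗ[invariants K S G] invariants K S G :=
  ⅟(Fintype.card G : K) • trace K S G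

lemma reynolds_coe (r : invariants K S G) : reynolds K S G r = r := by
  ext
  simp [reynolds, coe_trace, r.2 _, ← Nat.cast_smul_eq_nsmul K, smul_smul]

end Average

open Cochain

variable {n : ℕ}

variable (K S G) in
/-- The action of `G` on the Hochschild cochains of `S`, by transport of structure. -/
def cochainRep (n : ℕ) : Representation K G (Cochain K S S n) where
  toFun g := transport (MulSemiringAction.toAlgHom K S g⁻¹).toLinearMap
    (MulSemiringAction.toAlgHom K S g).toLinearMap
  map_one' := by ext; simp
  map_mul' g h := by ext; simp [mul_smul]

lemma coe_cochainRep (g : G) (F : Cochain K S S n) : ⇑(cochainRep K S G n g F) = mapG S G g F :=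
  rfl

lemma symmetric_intertwines_smul (g : G) :
    (Bimodule.symmetric K S S).Intertwines (Bimodule.symmetric K S S)
      (MulSemiringAction.toAlgHom K S g⁻¹) (MulSemiringAction.toAlgHom K S g).toLinearMap where
  left t x := by simp [Bimodule.symmetric]
  right t x := by simp [Bimodule.symmetric]

lemma d_cochainRep (g : G) (F : Cochain K S S n) :
    (Bimodule.symmetric K S S).d (cochainRep K S G n g F) =
      cochainRep K S G (n + 1) g ((Bimodule.symmetric K S S).d F) :=
  Bimodule.d_transport (symmetric_intertwines_smul g) F

section AverageMap

variable [Fintype G] [Invertible (Fintype.card G : K)]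

lemma averageMap_apply {V : Type*} [AddCommGroup V] [Module K V] (ρ : Representation K G V)
    (v : V) : ρ.averageMap v = ⅟(Fintype.card G : K) • ∑ g : G, ρ g v := by
  simp [GroupAlgebra.average]

lemma averageMap_sub_mem {V : Type*} [AddCommGroup V] [Module K V] (ρ : Representation K G V)
    {p : Submodule K V} {v : V} (hv : ∀ g, ρ g v - v ∈ p) : ρ.averageMap v - v ∈ p := by
  have : ρ.averageMap v - v = ⅟(Fintype.card G : K) • ∑ g : G, (ρ g v - v) := by
    rw [averageMap_apply]
    simp [smul_sub, ← Nat.cast_smul_eq_nsmul K, smul_smul]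
  rw [this]
  exact p.smul_mem _ (p.sum_mem fun g _ => hv g)

lemma d_averageMap (F : Cochain K S S n) :
    (Bimodule.symmetric K S S).d ((cochainRep K S G n).averageMap F) =
      (cochainRep K S G (n + 1)).averageMap ((Bimodule.symmetric K S S).d F) := by
  simp only [averageMap_apply, map_smul, map_sum, d_cochainRep]

lemma averageMap_apply_coe (F : Cochain K S S n) (b : Fin n → invariants K S G) :
    (cochainRep K S G n).averageMap F (fun i => b i) = reynolds K S G (F fun i => b i) := by
  have hb (g : G) : mapG S G g F (fun i => b i) = g • F fun i => b i := by
    simp only [mapG, (b _).2 g⁻¹]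
  rw [averageMap_apply]
  simp [reynolds, coe_trace, coe_cochainRep, hb]

end AverageMap

end Invariants

/-! ### Hochschild cohomology -/

section Cohomology

open Cochain

variable {K : Type} [CommRing K] {S T : Type} [CommRing S] [Algebra K S] [CommRing T]
  [Algebra K T] {N N' : Type} [AddCommGroup N] [Module K N] [AddCommGroup N'] [Module K N']
  {n : ℕ}

namespace Bimodule

/-- The coboundaries of degree `n`; in degree `0` only the zero cochain. -/
def coboundaries (B : Bimodule K S N) : ∀ n, Submodule K (Cochain K S N n)
  | 0 => ⊥
  | _ + 1 => LinearMap.range B.d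

lemma transport_mem_coboundaries {B : Bimodule K S N} {B' : Bimodule K T N'} {φ : T →ₐ[K] S}
    {p : N →ₗ[K] N'} (h : B.Intertwines B' φ p) {F : Cochain K S N n} (hF : F ∈ B.coboundaries n) :
    transport φ.toLinearMap p F ∈ B'.coboundaries n := by
  cases n with
  | zero => rw [show F = 0 from hF, map_zero]; exact Submodule.zero_mem _
  | succ n =>
    obtain ⟨E, rfl⟩ := hF
    exact ⟨_, d_transport h E⟩

end Bimodule

lemma isMultilinearCochain_coe (F : Cochain K T T n) : IsMultilinearCochain K F :=
  ⟨F.map_update_add, F.map_update_smul⟩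

lemma IsMultilinearCochain.exists_coe_eq {f : (Fin n → T) → T} (hf : IsMultilinearCochain K f) :
    ∃ F : Cochain K T T n, F = f :=
  ⟨MultilinearMap.mk' f hf.1 hf.2, rfl⟩

namespace HH

/-- The cocycles among the cochains of `T` with values in `T`. -/
abbrev Cocycle (K T : Type) [CommRing K] [CommRing T] [Algebra K T] (n : ℕ) :
    Submodule K (Cochain K T T n) :=
  LinearMap.ker (Bimodule.symmetric K T T).d

/-- The Hochschild cohomology class of a cocycle. -/
def mk : Cocycle K T n →+ HH K T n :=
  (QuotientAddGroup.mk' (coboundariesIn K T n)).comp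
    { toFun := fun F => ⟨F, isMultilinearCochain_coe F.1, by
        rw [hd_eq_d, show (Bimodule.symmetric K T T).d F.1 = 0 from F.2]; rfl⟩
      map_zero' := rfl
      map_add' := fun _ _ => rfl }

lemma exists_cocycle_coe_eq (f : cocycles K T n) : ∃ F : Cocycle K T n, ⇑F.1 = f.1 := by
  obtain ⟨F, hF⟩ := f.2.1.exists_coe_eq
  refine ⟨⟨F, ?_⟩, hF⟩
  ext a
  rw [← hd_eq_d, hF, f.2.2]
  rfl

lemma mk_eq_mk {F : Cocycle K T n} {f : cocycles K T n} (h : ⇑F.1 = f.1) :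
    mk F = QuotientAddGroup.mk f :=
  congrArg (QuotientAddGroup.mk' (coboundariesIn K T n)) (Subtype.ext h)

lemma mk_surjective : Function.Surjective (mk : Cocycle K T n →+ HH K T n) := by
  intro x
  obtain ⟨f, rfl⟩ := QuotientAddGroup.mk_surjective x
  obtain ⟨F, hF⟩ := exists_cocycle_coe_eq f
  exact ⟨F, mk_eq_mk hF⟩

lemma mk_eq_zero_iff {F : Cocycle K T n} :
    mk F = 0 ↔ F.1 ∈ (Bimodule.symmetric K T T).coboundaries n := by
  refine (QuotientAddGroup.eq_zero_iff _).trans ?_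
  cases n with
  | zero => exact DFunLike.coe_injective.eq_iff' rfl
  | succ n =>
    constructor
    · rintro ⟨h, hh, hFh⟩
      obtain ⟨E, rfl⟩ := hh.exists_coe_eq
      exact ⟨E, DFunLike.coe_injective ((hd_eq_d E).symm.trans hFh.symm)⟩
    · rintro ⟨E, hE⟩
      exact ⟨E, isMultilinearCochain_coe E, by rw [hd_eq_d, hE]; rfl⟩

lemma mk_eq_mk_iff {F F' : Cocycle K T n} :
    mk F = mk F' ↔ F.1 - F'.1 ∈ (Bimodule.symmetric K T T).coboundaries n := by
  rw [← sub_eq_zero, ← map_sub, mk_eq_zero_iff]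
  rfl

section Map

variable {φ : T →ₐ[K] S} {p : S →ₗ[K] T}
  (h : (Bimodule.symmetric K S S).Intertwines (Bimodule.symmetric K T T) φ p)

/-- Transport of cocycles. -/
def mapCocycle (n : ℕ) : Cocycle K S n →ₗ[K] Cocycle K T n :=
  (transport φ.toLinearMap p).restrict fun F hF =>
    (Bimodule.d_transport h F).trans
      (by rw [show (Bimodule.symmetric K S S).d F = 0 from hF, map_zero])

/-- The map induced on Hochschild cohomology by transport of cochains. -/
def map (n : ℕ) : HH K S n →+ HH K T n :=
  mk.liftOfSurjective mk_surjective ⟨mk.comp (mapCocycle h n).toAddMonoidHom, fun _ hF =>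
    mk_eq_zero_iff.2 (Bimodule.transport_mem_coboundaries h (mk_eq_zero_iff.1 hF))⟩

lemma map_mk (F : Cocycle K S n) : map h n (mk F) = mk (mapCocycle h n F) :=
  AddMonoidHom.liftOfRightInverse_comp_apply _ _ _ _ F

end Map
end HH

section Restriction

variable {R : Subalgebra K S} {π : S →ₗ[K] R}

lemma transport_apply_coe (hπ : ∀ r : R, π r = r) (k : Cochain K R R n) (b : Fin n → R) :
    transport π R.val.toLinearMap k (fun i => b i) = k b := by
  simp [hπ]

lemma d_transport_apply_coe (hπ : ∀ r : R, π r = r) (k : Cochain K R R n) (b : Fin (n + 1) → R) :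
    (Bimodule.symmetric K S S).d (transport π R.val.toLinearMap k) (fun i => b i) =
      (Bimodule.symmetric K R R).d k b := by
  have hval : (Bimodule.symmetric K R R).Intertwines ((Bimodule.symmetric K S S).restrict R.val)
      (AlgHom.id K R) R.val.toLinearMap :=
    ⟨fun _ _ => rfl, fun _ _ => rfl⟩
  have hext : transport R.val.toLinearMap LinearMap.id (transport π R.val.toLinearMap k) =
      transport LinearMap.id R.val.toLinearMap k :=
    MultilinearMap.ext (transport_apply_coe hπ k)
  have := Bimodule.d_transport ((Bimodule.symmetric K S S).intertwines_restrict R.val)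
    (transport π R.val.toLinearMap k)
  rw [hext] at this
  exact MultilinearMap.congr_fun (this.symm.trans (Bimodule.d_transport hval k)) b

lemma mem_coboundaries_of_restriction_mem_coboundaries (hπ : ∀ r : R, π r = r)
    (hexact : ∀ j < n, (Bimodule.symmetric K S S).RelativelyExact R j) {F : Cochain K S S n}
    (hF : (Bimodule.symmetric K S S).d F = 0) {k : Cochain K R R n}
    (hk : k ∈ (Bimodule.symmetric K R R).coboundaries n)
    (hFk : ∀ b : Fin n → R, F (fun i => b i) = k b) :
    F ∈ (Bimodule.symmetric K S S).coboundaries n := by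
  cases n with
  | zero =>
    obtain rfl : k = 0 := hk
    exact eq_zero_of_mem_relative (R := R) (mem_relative_iff.2 hFk)
  | succ n =>
    obtain ⟨k, rfl⟩ := hk
    have hrel : F - (Bimodule.symmetric K S S).d (transport π R.val.toLinearMap k) ∈
        relative R S (n + 1) :=
      mem_relative_iff.2 fun b => by
        rw [sub_apply, hFk, d_transport_apply_coe hπ, sub_self]
    obtain ⟨g, -, hg⟩ := hexact n n.lt_succ_self _ hrel
      (by rw [map_sub, hF, Bimodule.d_d, sub_zero])
    exact ⟨g + transport π R.val.toLinearMap k, by rw [map_add, hg, sub_add_cancel]⟩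

lemma exists_cocycle_restriction_eq (hπ : ∀ r : R, π r = r)
    (hexact : (Bimodule.symmetric K S S).RelativelyExact R n) {k : Cochain K R R n}
    (hk : (Bimodule.symmetric K R R).d k = 0) :
    ∃ F : HH.Cocycle K S n, ∀ b : Fin n → R, F.1 (fun i => b i) = k b := by
  obtain ⟨g, hg, hdg⟩ := hexact ((Bimodule.symmetric K S S).d (transport π R.val.toLinearMap k))
    (mem_relative_iff.2 fun b => by rw [d_transport_apply_coe hπ, hk]; rfl) (Bimodule.d_d _ _)
  refine ⟨⟨transport π R.val.toLinearMap k - g, ?_⟩, fun b => ?_⟩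
  · rw [LinearMap.mem_ker, map_sub, hdg, sub_self]
  · rw [sub_apply, transport_apply_coe hπ, mem_relative_iff.1 hg, sub_zero]

end Restriction
end Cohomology

section GroupCohomology

open Cochain

variable (K : Type) [CommRing K] (S : Type) [CommRing S] [Algebra K S] (G : Type) [Group G]
  [MulSemiringAction G S] [SMulCommClass G K S]

/-- The action of `G` on the Hochschild cohomology of `S`. -/
def HH.action (n : ℕ) (g : G) : HH K S n →+ HH K S n :=
  HH.map (symmetric_intertwines_smul g) n

variable {K S G} {n : ℕ}

lemma HH.action_mk (g : G) {f f' : cocycles K S n} (hf' : f'.1 = mapG S G g f.1) :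
    HH.action K S G n g (QuotientAddGroup.mk f) = QuotientAddGroup.mk f' := by
  obtain ⟨F, hF⟩ := HH.exists_cocycle_coe_eq f
  rw [← HH.mk_eq_mk hF, HH.action, HH.map_mk, HH.mk_eq_mk]
  rw [hf', ← hF]
  exact coe_cochainRep g F.1

variable [Fintype G] [Invertible (Fintype.card G : K)]

lemma reynolds_intertwines :
    (Bimodule.symmetric K S S).Intertwines
      (Bimodule.symmetric K (invariants K S G) (invariants K S G)) (invariants K S G).val
      ((reynolds K S G).restrictScalars K) :=
  ⟨(reynolds K S G).map_smul, (reynolds K S G).map_smul⟩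

variable (K S G) in
/-- Restriction of Hochschild classes to the invariants, followed by the Reynolds operator. -/
def HH.restrict (n : ℕ) : HH K S n →+ HH K (invariants K S G) n :=
  HH.map reynolds_intertwines n

/-- A `G`-fixed class is represented by a `G`-invariant cocycle, whose restriction to the invariants
is already invariant. -/
lemma HH.eq_zero_of_restrict_eq_zero
    (hexact : ∀ j < n, (Bimodule.symmetric K S S).RelativelyExact (invariants K S G) j)
    {x : HH K S n} (hx : x ∈ fixedSubgroup (HH.action K S G n)) (hres : HH.restrict K S G n x = 0) :
    x = 0 := by
  obtain ⟨F, rfl⟩ := HH.mk_surjective x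
  have hdF : (Bimodule.symmetric K S S).d F.1 = 0 := F.2
  have haverage : (cochainRep K S G n).averageMap F.1 - F.1 ∈
      (Bimodule.symmetric K S S).coboundaries n := averageMap_sub_mem _ fun g =>
    HH.mk_eq_mk_iff.1 ((HH.map_mk (symmetric_intertwines_smul g) F).symm.trans (hx g))
  rw [HH.restrict, HH.map_mk, HH.mk_eq_zero_iff] at hres
  have hboundary := mem_coboundaries_of_restriction_mem_coboundaries
    (π := (reynolds K S G).restrictScalars K) reynolds_coe hexact
    (by rw [d_averageMap, hdF, map_zero]) hres (averageMap_apply_coe F.1)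
  rw [HH.mk_eq_zero_iff, ← sub_sub_cancel ((cochainRep K S G n).averageMap F.1) F.1]
  exact Submodule.sub_mem _ hboundary haverage

lemma HH.exists_restrict_eq
    (hexact : (Bimodule.symmetric K S S).RelativelyExact (invariants K S G) n)
    (x : HH K (invariants K S G) n) :
    ∃ y ∈ fixedSubgroup (HH.action K S G n), HH.restrict K S G n y = x := by
  obtain ⟨k, rfl⟩ := HH.mk_surjective x
  obtain ⟨F, hF⟩ := exists_cocycle_restriction_eq
    (π := (reynolds K S G).restrictScalars K) reynolds_coe hexact k.2
  have hdF : (Bimodule.symmetric K S S).d F.1 = 0 := F.2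
  refine ⟨HH.mk ⟨(cochainRep K S G n).averageMap F.1, by
    rw [LinearMap.mem_ker, d_averageMap, hdF, map_zero]⟩, fun g => ?_, ?_⟩
  · refine (HH.map_mk (symmetric_intertwines_smul g) _).trans (congrArg HH.mk (Subtype.ext ?_))
    exact Representation.averageMap_invariant (cochainRep K S G n) F.1 g
  · refine (HH.map_mk reynolds_intertwines _).trans (congrArg HH.mk (Subtype.ext ?_))
    ext1 b
    change reynolds K S G ((cochainRep K S G n).averageMap F.1 fun i => b i) = k.1 b
    rw [averageMap_apply_coe, hF, reynolds_coe, reynolds_coe]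

/-- The inverse of `HH.restrict` on `G`-fixed classes. -/
def HH.equivFixedSubgroup
    (hexact : ∀ j ≤ n, (Bimodule.symmetric K S S).RelativelyExact (invariants K S G) j) :
    HH K (invariants K S G) n ≃+ fixedSubgroup (HH.action K S G n) :=
  (AddEquiv.ofBijective ((HH.restrict K S G n).comp (AddSubgroup.subtype _))
    ⟨(injective_iff_map_eq_zero _).2 fun x hx => Subtype.ext
      (HH.eq_zero_of_restrict_eq_zero (fun j hj => hexact j hj.le) x.2 hx),
    fun x => by
      obtain ⟨y, hy, hyx⟩ := HH.exists_restrict_eq (hexact n le_rfl) x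
      exact ⟨⟨y, hy⟩, hyx⟩⟩).symm

end GroupCohomology

lemma subsingleton_ext_of_lt_noetherDepth {K : Type} [CommRing K] {S : Type} [CommRing S]
    [Algebra K S] {G : Type} [Group G] [MulSemiringAction G S] [SMulCommClass G K S] {i : ℕ}
    (hi : (i : ℕ∞) < noetherDepth K S G) :
    Subsingleton (Abelian.Ext (ModuleCat.of S (S ⧸ noetherDifferent K S G))
      (ModuleCat.of S S) i) := by
  by_contra hne
  exact hi.not_ge (sInf_le ⟨i, rfl, hne⟩)

theorem hochschild_cohomology_of_invariant_ring_general
    (K : Type) [CommRing K] (S : Type) [CommRing S] [Algebra K S]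
    [IsNoetherianRing S] (hKproj : Module.Projective K S)
    (G : Type) [Group G] [Finite G] [MulSemiringAction G S] [SMulCommClass G K S]
    (houter : ∀ g : G, g ≠ 1 → ∀ s' : S, s' ≠ 0 → ∃ s : S, s * s' - s' * (g • s) ≠ 0)
    (hGinv : IsUnit ((Nat.card G : K))) :
    ∃ ρ : ∀ n : ℕ, G → (HH K S n →+ HH K S n),
      (∀ (n : ℕ) (g : G) (f f' : cocycles K S n),
          (f' : (Fin n → S) → S) = mapG S G g (f : (Fin n → S) → S) →
          ρ n g (QuotientAddGroup.mk f) = QuotientAddGroup.mk f')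
      ∧ (∀ i : ℕ, (i : ℕ∞) + 1 ≤ noetherDepth K S G →
          Nonempty (HH K (↥(invariants K S G)) i ≃+ fixedSubgroup (ρ i))) := by
  have := Fintype.ofFinite G
  have : Invertible (Fintype.card G : K) := by
    rw [← Nat.card_eq_fintype_card]
    exact hGinv.invertible
  refine ⟨HH.action K S G, fun n g f f' => HH.action_mk g, fun i hi => ⟨HH.equivFixedSubgroup ?_⟩⟩
  intro n hn
  refine relativelyExact_of_subsingleton_ext (π := (reynolds K S G).restrictScalars K)
    reynolds_coe (fun y => nonempty_galoisCoordinates houter) fun j hj => ?_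
  refine subsingleton_ext_of_lt_noetherDepth (lt_of_lt_of_le ?_ hi)
  exact_mod_cast Nat.lt_succ_of_le (hj.trans hn)

/-- Let `S` be a noetherian commutative `K`-algebra, projective as a
`K`-module, with `S ⊗_K S` noetherian, and let the finite group `G` act on `S`
infinitesimally through outer `K`-linear automorphisms, with `|G|` invertible in `K`.
Assume the invariant ring `R = S^G` is noetherian and `S` is a finitely generated
`R`-module. Let `c = depth(θ(S/R), S)`. Then there are natural isomorphisms
`Hoch^i(R) ≅ (Hoch^i(S))^G` for all `i ≤ c − 2`, where `G` acts on `Hoch^i(S)` via its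
action on `S`. -/
theorem hochschild_cohomology_of_invariant_ring
    (K : Type) [CommRing K] (S : Type) [CommRing S] [Algebra K S]
    [IsNoetherianRing S] (hKproj : Module.Projective K S)
    [IsNoetherianRing (TensorProduct K S S)]
    (G : Type) [Group G] [Finite G] [MulSemiringAction G S] [SMulCommClass G K S]
    (houter : ∀ g : G, g ≠ 1 → ∀ s' : S, s' ≠ 0 → ∃ s : S, s * s' - s' * (g • s) ≠ 0)
    (hGinv : IsUnit ((Nat.card G : K)))
    (hRnoeth : IsNoetherianRing (↥(invariants K S G)))
    (hSfin : Module.Finite (↥(invariants K S G)) S) :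
    ∃ ρ : ∀ n : ℕ, G → (HH K S n →+ HH K S n),
      -- `ρ` is the action of `G` on `Hoch(S)` induced by its action on cochains
      (∀ (n : ℕ) (g : G) (f f' : cocycles K S n),
          (f' : (Fin n → S) → S) = mapG S G g (f : (Fin n → S) → S) →
          ρ n g (QuotientAddGroup.mk f) = QuotientAddGroup.mk f')
      -- `Hoch^i(R) ≅ (Hoch^i(S))^G` for `i ≤ c − 2`
      ∧ (∀ i : ℕ, (i : ℕ∞) + 2 ≤ noetherDepth K S G →
          Nonempty (HH K (↥(invariants K S G)) i ≃+ fixedSubgroup (ρ i))) := by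
  obtain ⟨ρ, hρ, iso⟩ := hochschild_cohomology_of_invariant_ring_general K S hKproj G houter hGinv
  exact ⟨ρ, hρ, fun i hi => iso i ((add_le_add_right one_le_two _).trans hi)⟩

end MoritaHochschild
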